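/- arXiv:1604.02419 — 10 statements merged into one kernel-verified Lean document; each statement's English description precedes it below -/
import Mathlib

section
/- Let R be a commutative ring, σ : R → R a ring automorphism with σ ∘ σ = id, and ξ ∈ R an element with ξ·σ(ξ) = 1. Let n ≥ 1 and let y ∈ Mₙ(R) be a matrix such that ȳ = −y (where ȳ denotes the entrywise application of σ to y) and such that the matrix 1 − y is invertible in Mₙ(R). Then the Cayley transform γ := ξ·(1 + y)·(1 − y)⁻¹ satisfies γ·γ̄ = 1 and γ̄·γ = 1. In other words, the Cayley transform c_ξ carries σ-skew matrices (the points of the Lie algebra 𝔰 of the symmetric space) into matrices γ with γγ̄ = 1 (the points of the symmetric space S). -/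
open Matrix

/-- The Cayley transform `c_ξ(y) = ξ(1+y)(1-y)⁻¹` carries σ-skew matrices (points of the
Lie algebra 𝔰) into matrices `γ` with `γ·γ̄ = 1` (points of the symmetric space `S`). -/
theorem cayley_transform_mem_symmetric_space
    {R : Type*} [CommRing R] (σ : R ≃+* R) (hσ : ∀ x, σ (σ x) = x)
    (ξ : R) (hξ : ξ * σ ξ = 1)
    (n : ℕ) (hn : 1 ≤ n)
    (y : Matrix (Fin n) (Fin n) R)
    (hy : y.map σ = -y)
    (hinv : IsUnit (1 - y)) :
    (ξ • ((1 + y) * (1 - y)⁻¹)) * ((ξ • ((1 + y) * (1 - y)⁻¹)).map σ) = 1 ∧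
    ((ξ • ((1 + y) * (1 - y)⁻¹)).map σ) * (ξ • ((1 + y) * (1 - y)⁻¹)) = 1 := by
  have hdet : IsUnit (1 - y).det := (Matrix.isUnit_iff_isUnit_det _).mp hinv
  have h1 : (1 - y) * (1 - y)⁻¹ = 1 := Matrix.mul_nonsing_inv _ hdet
  have h2 : (1 - y)⁻¹ * (1 - y) = 1 := Matrix.nonsing_inv_mul _ hdet
  have hyF : (σ : R →+* R).mapMatrix y = -y := hy
  have hC : (1 + y) * (σ : R →+* R).mapMatrix (1 - y)⁻¹ = 1 := by
    have h := congrArg (σ : R →+* R).mapMatrix h1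
    rw [map_mul, map_sub, map_one, hyF, sub_neg_eq_add] at h
    exact h
  have hmap : (ξ • ((1 + y) * (1 - y)⁻¹)).map σ
      = σ ξ • ((1 - y) * (σ : R →+* R).mapMatrix (1 - y)⁻¹) := by
    have e : (1 - y) * (σ : R →+* R).mapMatrix (1 - y)⁻¹
        = (σ : R →+* R).mapMatrix ((1 + y) * (1 - y)⁻¹) := by
      rw [map_mul, map_add, map_one, hyF, sub_eq_add_neg]
    rw [e]
    ext i j
    exact map_mul σ ξ (((1 + y) * (1 - y)⁻¹) i j)
  have key : (ξ • ((1 + y) * (1 - y)⁻¹)) * ((ξ • ((1 + y) * (1 - y)⁻¹)).map σ) = 1 := by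
    rw [hmap, Matrix.smul_mul, Matrix.mul_smul, smul_smul, hξ, one_smul, Matrix.mul_assoc,
      ← Matrix.mul_assoc (1 - y)⁻¹, h2, Matrix.one_mul, hC]
  exact ⟨key, mul_eq_one_comm.mp key⟩
end

section
/- Let O be a commutative ring in which 2 is invertible, σ : O → O a ring automorphism with σ ∘ σ = id, ξ ∈ O with ξ·σ(ξ) = 1, I ⊆ O an ideal, and n ≥ 2. Define the sets 𝔨'° := { y ∈ Mₙ(O) : ȳ = −y, det(1 − y) is a unit of O, and the entry y_{i,n} lies in I for every 1 ≤ i ≤ n−1 } and K'° := { γ ∈ Mₙ(O) : γ·γ̄ = 1, det(γ + ξ·1) is a unit of O, and the entry γ_{i,n} lies in I for every 1 ≤ i ≤ n−1 }. Then the Cayley transform y ↦ ξ·(1 + y)·(1 − y)⁻¹ is a well-defined bijection from 𝔨'° onto K'°, with inverse γ ↦ (γ − ξ·1)·(γ + ξ·1)⁻¹. (In particular, the Cayley transform preserves the congruence condition of being block lower triangular modulo I with respect to the block decomposition n = (n−1) + 1.) -/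
open Matrix

lemma cay_mul_mem {O : Type*} [CommRing O] (I : Ideal O) {n : ℕ} (l : Fin n)
    (A B : Matrix (Fin n) (Fin n) O) (hA : ∀ i, i ≠ l → A i l ∈ I) (hB : ∀ i, i ≠ l → B i l ∈ I) :
    ∀ i, i ≠ l → (A * B) i l ∈ I := by
  intro i hi
  rw [Matrix.mul_apply]
  refine Ideal.sum_mem _ fun j _ => ?_
  by_cases hj : j = l
  · subst hj
    exact I.mul_mem_right _ (hA i hi)
  · exact I.mul_mem_left _ (hB j hj)

lemma cay_inv_mem {O : Type*} [CommRing O] (I : Ideal O) {n : ℕ} (l : Fin n)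
    (A B : Matrix (Fin n) (Fin n) O) (hA : ∀ i, i ≠ l → A i l ∈ I) (h : B * A = 1) :
    ∀ i, i ≠ l → B i l ∈ I := by
  have key : ∀ i, (1 : Matrix (Fin n) (Fin n) O) i l - B i l * A l l ∈ I := by
    intro i
    rw [← h, Matrix.mul_apply, ← Finset.add_sum_erase _ _ (Finset.mem_univ l),
      add_sub_cancel_left]
    refine Ideal.sum_mem _ fun j hj => ?_
    exact I.mul_mem_left _ (hA j (Finset.ne_of_mem_erase hj))
  intro i hi
  have h1 := key i
  have h2 := key l
  rw [Matrix.one_apply_ne hi] at h1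
  rw [Matrix.one_apply_eq] at h2
  have := I.add_mem (I.mul_mem_left (B i l) h2) (I.mul_mem_left (-B l l) h1)
  convert this using 1
  ring

lemma cay_one_mem {O : Type*} [CommRing O] (I : Ideal O) {n : ℕ} (l : Fin n) (c : O) :
    ∀ i, i ≠ l → (c • (1 : Matrix (Fin n) (Fin n) O)) i l ∈ I := by
  intro i hi
  simp [Matrix.one_apply_ne hi]

/-- The Cayley transform is a bijection from the σ-skew matrices that are congruent to a
block lower triangular matrix modulo `I` (for the block decomposition `n = (n-1) + 1`) and
have `det (1 - y)` a unit, onto the symmetric-space elements that are congruent to a block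
lower triangular matrix modulo `I` and have `det (γ + ξ)` a unit; the inverse bijection is
`γ ↦ (γ - ξ)(γ + ξ)⁻¹`. -/
theorem cayley_transform_bijection_congruence
    {O : Type*} [CommRing O] (h2 : IsUnit (2 : O))
    (σ : O ≃+* O) (hσ : ∀ x, σ (σ x) = x)
    (ξ : O) (hξ : ξ * σ ξ = 1)
    (I : Ideal O) (n : ℕ) (hn : 2 ≤ n) :
    let lastIdx : Fin n := ⟨n - 1, by omega⟩
    let 𝔨 : Set (Matrix (Fin n) (Fin n) O) :=
      { y | y.map σ = -y ∧ IsUnit (1 - y).det ∧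
            ∀ i : Fin n, (i : ℕ) < n - 1 → y i lastIdx ∈ I }
    let K : Set (Matrix (Fin n) (Fin n) O) :=
      { γ | γ * γ.map σ = 1 ∧ IsUnit (γ + ξ • 1).det ∧
            ∀ i : Fin n, (i : ℕ) < n - 1 → γ i lastIdx ∈ I }
    let f : Matrix (Fin n) (Fin n) O → Matrix (Fin n) (Fin n) O :=
      fun y => ξ • ((1 + y) * (1 - y)⁻¹)
    let g : Matrix (Fin n) (Fin n) O → Matrix (Fin n) (Fin n) O :=
      fun γ => (γ - ξ • 1) * (γ + ξ • 1)⁻¹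
    Set.MapsTo f 𝔨 K ∧ Set.MapsTo g K 𝔨 ∧
      (∀ y ∈ 𝔨, g (f y) = y) ∧ (∀ γ ∈ K, f (g γ) = γ) := by
  intro lastIdx 𝔨 K f g
  have hlt : ∀ i : Fin n, (i : ℕ) < n - 1 ↔ i ≠ lastIdx := by
    intro i
    rw [Ne, Fin.ext_iff]
    have := i.2
    change _ ↔ ¬ (i : ℕ) = n - 1
    omega
  obtain ⟨t, ht⟩ := h2.exists_right_inv
  have hξ' : σ ξ * ξ = 1 := by rw [mul_comm, hξ]
  -- facts on f
  have F : ∀ y, IsUnit (1 - y).det →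
      (f y + ξ • 1) * ((t * σ ξ) • (1 - y)) = 1 ∧ (f y - ξ • 1) * ((t * σ ξ) • (1 - y)) = y := by
    intro y hy
    have e1 : (1 - y)⁻¹ * (1 - y) = 1 := Matrix.nonsing_inv_mul _ hy
    have hc : t * σ ξ * ξ = t := by rw [mul_assoc, hξ', mul_one]
    have e2 : f y * ((t * σ ξ) • (1 - y)) = t • (1 + y) := by
      simp only [f]
      rw [mul_smul_comm, smul_mul_assoc, mul_assoc, e1, mul_one, smul_smul, hc]
    have e3 : (ξ • (1 : Matrix (Fin n) (Fin n) O)) * ((t * σ ξ) • (1 - y)) = t • (1 - y) := by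
      rw [mul_smul_comm, smul_mul_assoc, one_mul, smul_smul, hc]
    constructor
    · rw [add_mul, e2, e3, ← smul_add]
      have : (1 + y) + (1 - y) = (2 : O) • (1 : Matrix (Fin n) (Fin n) O) := by
        rw [two_smul]; abel
      rw [this, smul_smul, mul_comm, ht, one_smul]
    · rw [sub_mul, e2, e3, ← smul_sub]
      have : (1 + y) - (1 - y) = (2 : O) • y := by
        rw [two_smul]; abel
      rw [this, smul_smul, mul_comm, ht, one_smul]
  -- facts on g
  have G : ∀ γ, IsUnit (γ + ξ • 1 : Matrix (Fin n) (Fin n) O).det →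
      (1 - g γ) * ((t * σ ξ) • (γ + ξ • 1)) = 1 ∧
      (1 + g γ) * ((t * σ ξ) • (γ + ξ • 1)) = σ ξ • γ := by
    intro γ hγ
    have e1 : (γ + ξ • 1)⁻¹ * (γ + ξ • 1) = 1 := Matrix.nonsing_inv_mul _ hγ
    have e2 : g γ * ((t * σ ξ) • (γ + ξ • 1)) = (t * σ ξ) • (γ - ξ • 1) := by
      simp only [g]
      rw [mul_smul_comm, mul_assoc, e1, mul_one]
    constructor
    · rw [sub_mul, e2, one_mul, ← smul_sub]
      have : (γ + ξ • 1) - (γ - ξ • 1) = (2 * ξ) • (1 : Matrix (Fin n) (Fin n) O) := by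
        rw [mul_smul, two_smul]; abel
      rw [this, smul_smul, show t * σ ξ * (2 * ξ) = (2 * t) * (σ ξ * ξ) by ring, ht, hξ', one_mul,
        one_smul]
    · rw [add_mul, e2, one_mul, ← smul_add]
      have : (γ + ξ • 1) + (γ - ξ • 1) = (2 : O) • γ := by
        rw [two_smul]; abel
      rw [this, smul_smul, show t * σ ξ * 2 = (2 * t) * σ ξ by ring, ht, one_mul]
  have hdet : ∀ A B : Matrix (Fin n) (Fin n) O, A * B = 1 → IsUnit A.det := fun A B h =>
    Matrix.isUnit_det_of_right_inverse h
  let S : Matrix (Fin n) (Fin n) O →+* Matrix (Fin n) (Fin n) O := (σ : O →+* O).mapMatrix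
  have hS : ∀ A : Matrix (Fin n) (Fin n) O, A.map σ = S A := fun A => rfl
  have hSs : ∀ (c : O) (A : Matrix (Fin n) (Fin n) O), S (c • A) = σ c • S A := by
    intro c A
    ext i j
    simp [S]
  refine ⟨?_, ?_, ?_, ?_⟩
  · rintro y ⟨hy, hu, hI⟩
    have e1 : (1 - y)⁻¹ * (1 - y) = 1 := Matrix.nonsing_inv_mul _ hu
    have e1' : (1 - y) * (1 - y)⁻¹ = 1 := Matrix.mul_nonsing_inv _ hu
    rw [hS] at hy
    have hI' : ∀ i, i ≠ lastIdx → y i lastIdx ∈ I := fun i hi => hI i ((hlt i).2 hi)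
    refine ⟨?_, hdet _ _ (F y hu).1, ?_⟩
    · have e2 : (1 + y) * S ((1 - y)⁻¹) = 1 := by
        have := congrArg S e1'
        rwa [map_mul, map_sub, map_one, hy, sub_neg_eq_add] at this
      rw [hS]
      simp only [f]
      rw [hSs, map_mul, map_add, map_one, hy, ← sub_eq_add_neg, smul_mul_smul_comm, hξ, one_smul,
        mul_assoc, ← mul_assoc (1 - y)⁻¹, e1, one_mul, e2]
    · intro i hi
      have hone := cay_one_mem I lastIdx 1
      simp only [one_smul] at hone
      have hinv := cay_inv_mem I lastIdx (1 - y) (1 - y)⁻¹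
        (fun i hi => I.sub_mem (hone i hi) (hI' i hi)) e1
      exact I.mul_mem_left _ (cay_mul_mem I lastIdx (1 + y) (1 - y)⁻¹
        (fun i hi => I.add_mem (hone i hi) (hI' i hi)) hinv i ((hlt i).1 hi))
  · rintro γ ⟨hγ, hu, hI⟩
    have e1 : (γ + ξ • 1)⁻¹ * (γ + ξ • 1) = 1 := Matrix.nonsing_inv_mul _ hu
    have e1' : (γ + ξ • 1) * (γ + ξ • 1)⁻¹ = 1 := Matrix.mul_nonsing_inv _ hu
    rw [hS] at hγ
    have hI' : ∀ i, i ≠ lastIdx → γ i lastIdx ∈ I := fun i hi => hI i ((hlt i).2 hi)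
    refine ⟨?_, hdet _ _ (G γ hu).1, ?_⟩
    · rw [hS]
      have a1 : S (g γ) * (S γ + σ ξ • 1) = S γ - σ ξ • 1 := by
        have : g γ * (γ + ξ • 1) = γ - ξ • 1 := by
          simp only [g]
          rw [mul_assoc, e1, mul_one]
        have := congrArg S this
        rwa [map_mul, map_add, map_sub, hSs, map_one] at this
      have a2 : (S γ + σ ξ • 1) * S ((γ + ξ • 1)⁻¹) = 1 := by
        have := congrArg S e1'
        rwa [map_mul, map_add, hSs, map_one] at this
      have a3 : S γ + σ ξ • 1 = (γ + ξ • 1) * (σ ξ • S γ) := by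
        rw [add_mul, mul_smul_comm, hγ, smul_mul_smul_comm, hξ, one_smul, one_mul, add_comm]
      have a4 : -(g γ) * (S γ + σ ξ • 1) = S γ - σ ξ • 1 := by
        rw [a3]
        simp only [g]
        rw [neg_mul, mul_assoc, ← mul_assoc (γ + ξ • 1)⁻¹, e1, one_mul, sub_mul, mul_smul_comm, hγ,
          smul_mul_smul_comm, hξ, one_smul, one_mul, neg_sub]
      calc S (g γ) = S (g γ) * (S γ + σ ξ • 1) * S ((γ + ξ • 1)⁻¹) := by
            rw [mul_assoc, a2, mul_one]
        _ = -(g γ) * (S γ + σ ξ • 1) * S ((γ + ξ • 1)⁻¹) := by rw [a1, a4]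
        _ = -(g γ) := by rw [mul_assoc, a2, mul_one]
    · intro i hi
      have hone := cay_one_mem I lastIdx ξ
      have hinv := cay_inv_mem I lastIdx (γ + ξ • 1) (γ + ξ • 1)⁻¹
        (fun i hi => I.add_mem (hI' i hi) (hone i hi)) e1
      exact cay_mul_mem I lastIdx (γ - ξ • 1) (γ + ξ • 1)⁻¹
        (fun i hi => I.sub_mem (hI' i hi) (hone i hi)) hinv i ((hlt i).1 hi)
  · rintro y ⟨-, hu, -⟩
    obtain ⟨h1, h3⟩ := F y hu
    change (f y - ξ • 1) * (f y + ξ • 1)⁻¹ = y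
    rw [Matrix.inv_eq_right_inv h1, h3]
  · rintro γ ⟨-, hu, -⟩
    obtain ⟨h1, h3⟩ := G γ hu
    change ξ • ((1 + g γ) * (1 - g γ)⁻¹) = γ
    rw [Matrix.inv_eq_right_inv h1, h3, smul_smul, hξ, one_smul]
end

section
/- Let O be an integrally closed domain with fraction field F, and suppose that 2 is a unit of O; let ξ be a unit of O and n ≥ 1. Define Y := { y ∈ Mₙ(F) : every coefficient of the characteristic polynomial of y lies in O, and det(1 − y) is a unit of O } (the strongly integral matrices) and Γ := { γ ∈ Mₙ(F) : every coefficient of the characteristic polynomial of γ lies in O, and det(γ + ξ·1) is a unit of O } (the ξ-strongly integral matrices). Then the Cayley transform y ↦ ξ·(1 + y)·(1 − y)⁻¹ is a well-defined bijection from Y onto Γ, with inverse γ ↦ (γ − ξ·1)·(γ + ξ·1)⁻¹; moreover, for y ∈ Y one has det(c_ξ(y) + ξ·1)·det(1 − y) = (2ξ)ⁿ. -/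
open Matrix

open Polynomial in
lemma det_hom_field {K : Type*} [Field K] {n : ℕ} (M : Matrix (Fin n) (Fin n) K) (a b : K)
    (hb : b ≠ 0) :
    (a • (1 : Matrix (Fin n) (Fin n) K) - b • M).det =
      ∑ k ∈ Finset.range (n + 1), M.charpoly.coeff k * a ^ k * b ^ (n - k) := by
  have h1 : a • (1 : Matrix (Fin n) (Fin n) K) - b • M = b • (Matrix.scalar (Fin n) (a / b) - M) := by
    rw [smul_sub]
    congr 1
    rw [Matrix.scalar_apply, ← Matrix.smul_one_eq_diagonal, smul_smul, mul_div_cancel₀ _ hb]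
  rw [h1, Matrix.det_smul, ← Matrix.eval_charpoly, Polynomial.eval_eq_sum_range,
    Matrix.charpoly_natDegree_eq_dim, Fintype.card_fin, Finset.mul_sum]
  refine Finset.sum_congr rfl fun k hk => ?_
  have hk' : k ≤ n := by simpa [Nat.lt_succ_iff] using hk
  obtain ⟨m, rfl⟩ := Nat.exists_eq_add_of_le hk'
  rw [Nat.add_sub_cancel_left, div_pow, pow_add]
  field_simp

lemma det_hom {R : Type*} [CommRing R] [IsDomain R] {n : ℕ} (M : Matrix (Fin n) (Fin n) R)
    (a b : R) (hb : b ≠ 0) :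
    (a • (1 : Matrix (Fin n) (Fin n) R) - b • M).det =
      ∑ k ∈ Finset.range (n + 1), M.charpoly.coeff k * a ^ k * b ^ (n - k) := by
  let φ := algebraMap R (FractionRing R)
  have hφ : Function.Injective φ := IsFractionRing.injective R (FractionRing R)
  apply hφ
  have := det_hom_field (M.map φ) (φ a) (φ b) (by simpa using (map_ne_zero_iff φ hφ).2 hb)
  rw [RingHom.map_det, map_sum]
  have e : φ.mapMatrix (a • 1 - b • M) = φ a • 1 - φ b • M.map φ := by
    refine Matrix.ext fun i j => ?_
    by_cases h : i = j <;> simp [h]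
  rw [e, this]
  refine Finset.sum_congr rfl fun k _ => ?_
  rw [Matrix.charpoly_map, Polynomial.coeff_map]
  simp

open Polynomial in
lemma charpoly_mem {O F : Type*} [CommRing O] [Field F] [Algebra O F] {n : ℕ}
    (y A P : Matrix (Fin n) (Fin n) F) (α β γ δ : O) (hδ : algebraMap O F δ ≠ 0)
    (hy : ∀ k, y.charpoly.coeff k ∈ (algebraMap O F).range)
    (hP : P = algebraMap O F γ • 1 + algebraMap O F δ • y)
    (hA : A * P = algebraMap O F α • 1 + algebraMap O F β • y)
    (u : Oˣ) (hu : algebraMap O F (u : O) = P.det) :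
    ∀ k, A.charpoly.coeff k ∈ (algebraMap O F).range := by
  set φ := algebraMap O F
  have hC : ∀ x ∈ φ.range, C x ∈ (mapRingHom φ).range := by
    rintro _ ⟨x, rfl⟩
    exact ⟨C x, by simp⟩
  have hX : (X : F[X]) ∈ (mapRingHom φ).range := ⟨X, by simp⟩
  have key : A.charpoly * C P.det =
      ((C (φ γ) * X - C (φ α)) • (1 : Matrix (Fin n) (Fin n) F[X]) -
        (C (φ β) - C (φ δ) * X) • y.map C).det := by
    rw [Matrix.charpoly, RingHom.map_det, ← Matrix.det_mul]
    congr 1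
    rw [Matrix.charmatrix, sub_mul, ← map_mul, hA, hP]
    refine Matrix.ext fun i j => ?_
    by_cases h : i = j <;> simp [h, Matrix.scalar_apply, Matrix.diagonal_mul] <;> ring
  have hb : C (φ β) - C (φ δ) * X ≠ 0 := by
    intro h
    have := congrArg (fun p => coeff p 1) h
    simp [coeff_C] at this
    exact hδ this
  rw [det_hom _ _ _ hb] at key
  have hmem : A.charpoly * C P.det ∈ (mapRingHom φ).range := by
    rw [key]
    refine Subring.sum_mem _ fun k _ => Subring.mul_mem _ (Subring.mul_mem _ ?_
      (Subring.pow_mem _ ?_ _)) (Subring.pow_mem _ ?_ _)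
    · rw [Matrix.charpoly_map, coeff_map]
      exact hC _ (hy k)
    · exact Subring.sub_mem _ (Subring.mul_mem _ (hC _ ⟨_, rfl⟩) hX) (hC _ ⟨_, rfl⟩)
    · exact Subring.sub_mem _ (hC _ ⟨_, rfl⟩) (Subring.mul_mem _ (hC _ ⟨_, rfl⟩) hX)
  have h2 : A.charpoly = A.charpoly * C P.det * C (φ (↑u⁻¹ : O)) := by
    rw [mul_assoc, ← C_mul, ← hu, ← map_mul]
    simp
  have h3 : A.charpoly ∈ (mapRingHom φ).range := by
    rw [h2]
    exact Subring.mul_mem _ hmem (hC _ ⟨_, rfl⟩)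
  obtain ⟨p, hp⟩ := h3
  intro k
  exact ⟨p.coeff k, by rw [← hp]; simp⟩

lemma unit_of_mul {O F : Type*} [CommRing O] [Field F] [Algebra O F] (u w : Oˣ) (x d : F)
    (hu : algebraMap O F (u : O) = d) (h : x * d = algebraMap O F (w : O)) :
    ∃ v : Oˣ, algebraMap O F (v : O) = x := by
  refine ⟨w * u⁻¹, ?_⟩
  rw [Units.val_mul, map_mul, ← h, ← hu, mul_assoc, ← map_mul]
  simp

/-- Over an integrally closed domain `O` with fraction field `F` in which `2` and `ξ` are
units of `O`, the Cayley transform `y ↦ ξ(1+y)(1-y)⁻¹` is a bijection from the strongly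
integral matrices onto the ξ-strongly integral matrices, with inverse
`γ ↦ (γ-ξ)(γ+ξ)⁻¹`; moreover `det(c_ξ(y) + ξ)·det(1-y) = (2ξ)ⁿ`. -/
theorem cayley_transform_strongly_integral_bijection
    (O F : Type*) [CommRing O] [IsDomain O] [IsIntegrallyClosed O]
    [Field F] [Algebra O F] [IsFractionRing O F]
    (h2 : IsUnit (2 : O)) (ξ : Oˣ) (n : ℕ) (hn : 1 ≤ n) :
    let ξF : F := algebraMap O F (ξ : O)
    let Y : Set (Matrix (Fin n) (Fin n) F) :=
      { y | (∀ k, y.charpoly.coeff k ∈ (algebraMap O F).range) ∧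
            ∃ u : Oˣ, algebraMap O F (u : O) = (1 - y).det }
    let Γ : Set (Matrix (Fin n) (Fin n) F) :=
      { γ | (∀ k, γ.charpoly.coeff k ∈ (algebraMap O F).range) ∧
            ∃ u : Oˣ, algebraMap O F (u : O) = (γ + ξF • 1).det }
    let f : Matrix (Fin n) (Fin n) F → Matrix (Fin n) (Fin n) F :=
      fun y => ξF • ((1 + y) * (1 - y)⁻¹)
    let g : Matrix (Fin n) (Fin n) F → Matrix (Fin n) (Fin n) F :=
      fun γ => (γ - ξF • 1) * (γ + ξF • 1)⁻¹
    Set.MapsTo f Y Γ ∧ Set.MapsTo g Γ Y ∧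
      (∀ y ∈ Y, g (f y) = y) ∧ (∀ γ ∈ Γ, f (g γ) = γ) ∧
      (∀ y ∈ Y, (f y + ξF • 1).det * (1 - y).det = (2 * ξF) ^ n) := by
  intro ξF Y Γ f g
  have huF : ∀ u : Oˣ, IsUnit (algebraMap O F (u : O)) := fun u => u.isUnit.map _
  obtain ⟨t, ht⟩ := h2
  have htF : algebraMap O F (t : O) = 2 := by rw [ht, map_ofNat]
  have hξ : ξF ≠ 0 := (huF ξ).ne_zero
  have hw : algebraMap O F (((t * ξ) ^ n : Oˣ) : O) = (2 * ξF) ^ n := by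
    simp [htF, ξF]
  have hYu : ∀ y ∈ Y, IsUnit (1 - y).det := by
    rintro y ⟨-, u, hu⟩
    exact hu ▸ huF u
  have hΓu : ∀ y ∈ Γ, IsUnit (y + ξF • 1).det := by
    rintro y ⟨-, u, hu⟩
    exact hu ▸ huF u
  have hf : ∀ y ∈ Y, f y * (1 - y) = ξF • (1 + y) := by
    intro y hy
    simp only [f]
    rw [smul_mul_assoc, Matrix.nonsing_inv_mul_cancel_right _ _ (hYu y hy)]
  have hg : ∀ y ∈ Γ, g y * (y + ξF • 1) = y - ξF • 1 := by
    intro y hy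
    simp only [g]
    rw [Matrix.nonsing_inv_mul_cancel_right _ _ (hΓu y hy)]
  have hf1 : ∀ y ∈ Y, (f y + ξF • 1) * (1 - y) = (2 * ξF) • 1 := by
    intro y hy
    rw [add_mul, hf y hy, smul_mul_assoc, one_mul]
    module
  have hg1 : ∀ y ∈ Γ, (1 - g y) * (y + ξF • 1) = (2 * ξF) • 1 := by
    intro y hy
    rw [sub_mul, hg y hy, one_mul]
    module
  have hfd : ∀ y ∈ Y, (f y + ξF • 1).det * (1 - y).det = (2 * ξF) ^ n := by
    intro y hy
    rw [← Matrix.det_mul, hf1 y hy]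
    simp
  have hgd : ∀ y ∈ Γ, (1 - g y).det * (y + ξF • 1).det = (2 * ξF) ^ n := by
    intro y hy
    rw [← Matrix.det_mul, hg1 y hy]
    simp
  have hmf : Set.MapsTo f Y Γ := by
    intro y hy
    obtain ⟨hy1, u, hu⟩ := id hy
    refine ⟨charpoly_mem y (f y) (1 - y) (ξ : O) ξ 1 (-1) (by simp) hy1 ?_ ?_ u hu,
      unit_of_mul u _ _ _ hu ((hfd y hy).trans hw.symm)⟩
    · simp [sub_eq_add_neg]
    · rw [hf y hy, smul_add]
  have hmg : Set.MapsTo g Γ Y := by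
    intro y hy
    obtain ⟨hy1, u, hu⟩ := id hy
    refine ⟨charpoly_mem y (g y) (y + ξF • 1) (-ξ : O) 1 ξ 1 (by simp) hy1 ?_ ?_ u hu,
      unit_of_mul u _ _ _ hu ((hgd y hy).trans hw.symm)⟩
    · simp [ξF, add_comm]
    · rw [hg y hy, map_neg, map_one]
      module
  refine ⟨hmf, hmg, ?_, ?_, hfd⟩
  · intro y hy
    have hc : f y - ξF • 1 = y * (f y + ξF • 1) := by
      have hu := (Matrix.isUnit_iff_isUnit_det _).2 (hYu y hy)
      apply hu.mul_right_cancel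
      rw [mul_assoc, hf1 y hy, sub_mul, hf y hy, smul_mul_assoc, one_mul, mul_smul_comm, mul_one]
      module
    change (f y - ξF • 1) * (f y + ξF • 1)⁻¹ = y
    rw [hc, Matrix.mul_nonsing_inv_cancel_right _ _ (hΓu _ (hmf hy))]
  · intro y hy
    have hc : ξF • (1 + g y) = y * (1 - g y) := by
      have hu := (Matrix.isUnit_iff_isUnit_det _).2 (hΓu y hy)
      apply hu.mul_right_cancel
      rw [mul_assoc, hg1 y hy, smul_mul_assoc, add_mul, hg y hy, one_mul, mul_smul_comm, mul_one]
      module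
    change ξF • ((1 + g y) * (1 - g y)⁻¹) = y
    rw [← smul_mul_assoc, hc, Matrix.mul_nonsing_inv_cancel_right _ _ (hYu _ (hmg hy))]
end

section
/- Let F be a field with 2 ≠ 0, n ≥ 1, ξ ∈ Fˣ, and let y ∈ Mₙ(F) be a matrix with 1 − y invertible; set γ := ξ·(1 + y)·(1 − y)⁻¹. Then for every vector e ∈ Fⁿ, the linear span of {y^i·e : 0 ≤ i ≤ n−1} equals the linear span of {γ^i·e : 0 ≤ i ≤ n−1}. In particular, the family (e, y·e, …, y^{n−1}·e) is linearly independent if and only if the family (e, γ·e, …, γ^{n−1}·e) is linearly independent; hence the Cayley transform preserves regular semisimplicity. -/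
open Matrix

lemma krylov_mem {F : Type*} [Field F] {n : ℕ} (hn : 1 ≤ n)
    (y g : Matrix (Fin n) (Fin n) F) (hg : g ∈ Algebra.adjoin F {y}) (e : Fin n → F) :
    g.mulVec e ∈ Submodule.span F (Set.range fun i : Fin n => (y ^ (i : ℕ)).mulVec e) := by
  rw [Algebra.adjoin_singleton_eq_range_aeval] at hg
  obtain ⟨p, rfl⟩ := hg
  change (Polynomial.aeval y p).mulVec e ∈ _
  rw [Matrix.aeval_eq_aeval_mod_charpoly]
  have hd : (p %ₘ y.charpoly).natDegree < n := by
    have := Polynomial.natDegree_modByMonic_lt p y.charpoly_monic (by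
      intro h
      have := y.charpoly_natDegree_eq_dim
      rw [h] at this
      simp at this
      omega)
    simpa [y.charpoly_natDegree_eq_dim] using this
  rw [Polynomial.aeval_eq_sum_range' hd, Matrix.sum_mulVec]
  refine Submodule.sum_mem _ fun i hi => ?_
  rw [Matrix.smul_mulVec]
  exact Submodule.smul_mem _ _ (Submodule.subset_span ⟨⟨i, Finset.mem_range.1 hi⟩, rfl⟩)

lemma krylov_le {F : Type*} [Field F] {n : ℕ} (hn : 1 ≤ n)
    (y g : Matrix (Fin n) (Fin n) F) (hg : g ∈ Algebra.adjoin F {y}) (e : Fin n → F) :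
    Submodule.span F (Set.range fun i : Fin n => (g ^ (i : ℕ)).mulVec e) ≤
      Submodule.span F (Set.range fun i : Fin n => (y ^ (i : ℕ)).mulVec e) := by
  rw [Submodule.span_le]
  rintro _ ⟨i, rfl⟩
  exact krylov_mem hn y _ (pow_mem hg _) e

lemma matrix_inv_mem {F : Type*} [Field F] {n : ℕ} (S : Subalgebra F (Matrix (Fin n) (Fin n) F))
    (A : Matrix (Fin n) (Fin n) F) (hA : IsUnit A) (hS : A ∈ S) : A⁻¹ ∈ S := by
  have hdet : IsUnit A.det := (Matrix.isUnit_iff_isUnit_det A).1 hA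
  have hc : A.charpoly.coeff 0 ≠ 0 := by
    intro h
    apply hdet.ne_zero
    rw [Matrix.det_eq_sign_charpoly_coeff, h, mul_zero]
  have h := A.aeval_self_charpoly
  rw [← Polynomial.divX_mul_X_add A.charpoly] at h
  simp only [map_add, map_mul, Polynomial.aeval_X, Polynomial.aeval_C] at h
  have key : (-(A.charpoly.coeff 0)⁻¹) • Polynomial.aeval A A.charpoly.divX * A = 1 := by
    rw [smul_mul_assoc, eq_neg_of_add_eq_zero_left h, Algebra.algebraMap_eq_smul_one,
      smul_neg, neg_smul, neg_neg, smul_smul, inv_mul_cancel₀ hc, one_smul]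
  rw [Matrix.inv_eq_left_inv key]
  refine S.smul_mem ?_ _
  exact Algebra.adjoin_le (Set.singleton_subset_iff.2 hS)
    (Polynomial.aeval_mem_adjoin_singleton F A)

/-- The Cayley transform preserves Krylov spans: for `γ = ξ(1+y)(1-y)⁻¹`, the span of
`e, y e, …, y^{n-1} e` equals the span of `e, γ e, …, γ^{n-1} e`, and the first family is
linearly independent iff the second one is; hence the Cayley transform preserves
regular semisimplicity. -/
theorem cayley_transform_preserves_krylov_span
    (F : Type*) [Field F] (h2 : (2 : F) ≠ 0)
    (n : ℕ) (hn : 1 ≤ n) (ξ : F) (hξ : ξ ≠ 0)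
    (y : Matrix (Fin n) (Fin n) F) (hy : IsUnit (1 - y)) :
    let γ : Matrix (Fin n) (Fin n) F := ξ • ((1 + y) * (1 - y)⁻¹)
    ∀ e : Fin n → F,
      Submodule.span F (Set.range fun i : Fin n => (y ^ (i : ℕ)).mulVec e)
        = Submodule.span F (Set.range fun i : Fin n => (γ ^ (i : ℕ)).mulVec e) ∧
      (LinearIndependent F (fun i : Fin n => (y ^ (i : ℕ)).mulVec e) ↔
        LinearIndependent F (fun i : Fin n => (γ ^ (i : ℕ)).mulVec e)) := by
  intro γ e
  have hdet : IsUnit (1 - y).det := (Matrix.isUnit_iff_isUnit_det _).1 hy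
  have hinv : (1 - y) * (1 - y)⁻¹ = 1 := Matrix.mul_nonsing_inv _ hdet
  have hγ : γ ∈ Algebra.adjoin F {y} := by
    have hyS : y ∈ Algebra.adjoin F {y} := Algebra.self_mem_adjoin_singleton F y
    exact Subalgebra.smul_mem _ (mul_mem (add_mem (one_mem _) hyS)
      (matrix_inv_mem _ _ hy (sub_mem (one_mem _) hyS))) _
  have hsum : γ + ξ • (1 : Matrix (Fin n) (Fin n) F) = (2 * ξ) • (1 - y)⁻¹ := by
    calc γ + ξ • (1 : Matrix (Fin n) (Fin n) F)
        = ξ • ((1 + y) * (1 - y)⁻¹) + ξ • ((1 - y) * (1 - y)⁻¹) := by rw [hinv]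
      _ = ξ • (((1 + y) + (1 - y)) * (1 - y)⁻¹) := by rw [← smul_add, ← add_mul]
      _ = (2 * ξ) • (1 - y)⁻¹ := by
        have : (1 + y) + (1 - y) = (2 : F) • (1 : Matrix (Fin n) (Fin n) F) := by
          rw [two_smul]; abel
        rw [this, smul_mul_assoc, one_mul, smul_smul, mul_comm]
  have h2ξ : 2 * ξ ≠ 0 := mul_ne_zero h2 hξ
  have hyγ : y ∈ Algebra.adjoin F {γ} := by
    have hγS : γ ∈ Algebra.adjoin F {γ} := Algebra.self_mem_adjoin_singleton F γ
    have h1 : (1 - y)⁻¹ ∈ Algebra.adjoin F {γ} := by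
      have : (1 - y)⁻¹ = (2 * ξ)⁻¹ • (γ + ξ • (1 : Matrix (Fin n) (Fin n) F)) := by
        rw [hsum, smul_smul, inv_mul_cancel₀ h2ξ, one_smul]
      rw [this]
      exact Subalgebra.smul_mem _ (add_mem hγS (Subalgebra.smul_mem _ (one_mem _) _)) _
    have h3 := matrix_inv_mem _ _ (Matrix.isUnit_nonsing_inv_iff.2 hy) h1
    rw [Matrix.nonsing_inv_nonsing_inv _ hdet] at h3
    simpa using sub_mem (one_mem _) h3
  have hspan := le_antisymm (krylov_le hn γ y hyγ e) (krylov_le hn y γ hγ e)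
  refine ⟨hspan, ?_⟩
  rw [linearIndependent_iff_card_eq_finrank_span, linearIndependent_iff_card_eq_finrank_span,
    Set.finrank, Set.finrank, hspan]
end

section
/- Let R be a commutative ring, n ≥ 2, and let y ∈ Mₙ(R) be written in block form y = [[A, b],[c, d]], where A ∈ M_{n−1}(R), b is a column vector of length n−1, c is a row vector of length n−1, and d ∈ R. Let e = (0, …, 0, 1)ᵀ ∈ Rⁿ be the last standard basis vector. Then the determinant of the n×n matrix whose columns are e, y·e, y²·e, …, y^{n−1}·e equals (−1)^{n−1} times the determinant of the (n−1)×(n−1) matrix whose columns are b, A·b, A²·b, …, A^{n−2}·b. -/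
open Matrix

theorem krylov_aux {R : Type*} [CommRing R] (m : ℕ)
    (y : Matrix (Fin (m + 1)) (Fin (m + 1)) R)
    (A : Matrix (Fin m) (Fin m) R)
    (hA : ∀ i j, A i j = y (Fin.castSucc i) (Fin.castSucc j))
    (b : Fin m → R) (hb : ∀ i, b i = y (Fin.castSucc i) (Fin.last m))
    (e : Fin (m + 1) → R) (he : e = Pi.single (Fin.last m) 1) (j : ℕ) :
    (fun i : Fin m => (y ^ j).mulVec e (Fin.castSucc i))
      = ∑ k ∈ Finset.range j,
          (y ^ (j - 1 - k)).mulVec e (Fin.last m) • (A ^ k).mulVec b := by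
  induction j with
  | zero =>
    ext i
    simp [he, Pi.single_apply, Fin.castSucc_ne_last]
  | succ j ih =>
    have h1 : (fun i : Fin m => (y ^ (j + 1)).mulVec e (Fin.castSucc i))
        = A.mulVec (fun i : Fin m => (y ^ j).mulVec e (Fin.castSucc i))
          + (y ^ j).mulVec e (Fin.last m) • b := by
      ext i
      rw [pow_succ', ← Matrix.mulVec_mulVec]
      simp only [Pi.add_apply, Pi.smul_apply, smul_eq_mul]
      generalize (y ^ j).mulVec e = v
      rw [Matrix.mulVec_eq_sum, Matrix.mulVec_eq_sum]
      simp [Finset.sum_apply, Fin.sum_univ_castSucc, hA, hb, mul_comm]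
    rw [h1, ih, Finset.sum_range_succ', Matrix.mulVec_sum]
    congr 1
    · refine Finset.sum_congr rfl fun k hk => ?_
      rw [Matrix.mulVec_smul, Matrix.mulVec_mulVec, ← pow_succ']
      have hk2 : j - 1 - k = j + 1 - 1 - (k + 1) := by omega
      rw [hk2]
    · simp

/-- For a square matrix `y` of size `n = m+1` in block form `[[A, b],[c, d]]` (with `A` of
size `m × m`) and `e` the last standard basis vector, the determinant of the Krylov matrix
`(e | y e | y² e | ⋯ | y^{n-1} e)` equals `(-1)^{n-1}` times the determinant of the Krylov
matrix `(b | A b | A² b | ⋯ | A^{n-2} b)`. -/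
theorem krylov_det_block
    (R : Type*) [CommRing R] (m : ℕ) (hm : 1 ≤ m)
    (y : Matrix (Fin (m + 1)) (Fin (m + 1)) R) :
    let A : Matrix (Fin m) (Fin m) R :=
      Matrix.of fun i j => y (Fin.castSucc i) (Fin.castSucc j)
    let b : Fin m → R := fun i => y (Fin.castSucc i) (Fin.last m)
    let e : Fin (m + 1) → R := Pi.single (Fin.last m) 1
    Matrix.det (Matrix.of fun i j : Fin (m + 1) => (y ^ (j : ℕ)).mulVec e i)
      = (-1) ^ m * Matrix.det (Matrix.of fun i j : Fin m => (A ^ (j : ℕ)).mulVec b i) := by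
  intro A b e
  have key := krylov_aux m y A (fun _ _ => rfl) b (fun _ => rfl) e rfl
  rw [Matrix.det_succ_column_zero, Fin.sum_univ_castSucc, Finset.sum_eq_zero, zero_add]
  · have hU : (Matrix.of fun i j : Fin (m + 1) => (y ^ (j : ℕ)).mulVec e i).submatrix
          (Fin.last m).succAbove Fin.succ
        = (Matrix.of fun i j : Fin m => (A ^ (j : ℕ)).mulVec b i)
          * (Matrix.of fun k j : Fin m =>
              if (k : ℕ) ≤ j then (y ^ ((j : ℕ) - k)).mulVec e (Fin.last m) else 0) := by
      ext i j
      have h := congrFun (key (j + 1)) i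
      simp only [Matrix.submatrix_apply, Matrix.of_apply, Fin.succAbove_last, Fin.val_succ,
        Matrix.mul_apply]
      rw [h, Fin.sum_univ_eq_sum_range (fun k => (A ^ k).mulVec b i *
        if k ≤ (j : ℕ) then (y ^ ((j : ℕ) - k)).mulVec e (Fin.last m) else 0) m,
        Finset.sum_apply]
      have hs : Finset.range ((j : ℕ) + 1) ⊆ Finset.range m :=
        Finset.range_subset_range.2 j.isLt
      rw [← Finset.sum_subset hs]
      · refine Finset.sum_congr rfl fun k hk => ?_
        have hk' : k ≤ (j : ℕ) := Nat.lt_succ_iff.1 (Finset.mem_range.1 hk)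
        simp [hk', mul_comm]
      · intro k _ hk
        have hk' : ¬ k ≤ (j : ℕ) := fun h => hk (Finset.mem_range.2 (Nat.lt_succ_of_le h))
        simp [hk']
    have hT : (Matrix.of fun k j : Fin m =>
        if (k : ℕ) ≤ j then (y ^ ((j : ℕ) - k)).mulVec e (Fin.last m) else 0).det = 1 := by
      rw [Matrix.det_of_isUpperTriangular]
      · simp [e]
      · intro k j hjk
        have : ¬ (k : ℕ) ≤ j := not_le.2 hjk
        simp only [Matrix.of_apply, if_neg this]
    rw [hU, Matrix.det_mul, hT]
    simp [e]
  · intro i _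
    simp [e, Pi.single_apply, Fin.castSucc_ne_last]
end

section
/- Let O be a commutative ring, σ : O → O a ring automorphism with σ ∘ σ = id, and ϖ ∈ O a regular element (nonzerodivisor) with σ(ϖ) = ϖ. Let n ≥ 2 and let K ∈ M_{n−1}(O) be a matrix with ᵗK̄ = K (σ-hermitian) and det K a unit of O. Set J := the block diagonal matrix with blocks K and ϖ, and J̃ := the block diagonal matrix with blocks K and 1 (both n×n, block sizes (n−1) + 1). Then the map μ sending a block matrix x = [[A, b],[c, d]] (with A of size (n−1)×(n−1), b a column, c a row, d a scalar) to μ(x) := [[A, ϖ·b],[c, d]] is a bijection from { x ∈ Mₙ(O) : ᵗx̄·J̃ + J̃·x = 0 } onto { x ∈ Mₙ(O) : ᵗx̄·J + J·x = 0 }. (Equivalently: for every integral element of the unitary Lie algebra of J, the b-block is automatically divisible by ϖ, and dividing it by ϖ yields an integral element of the unitary Lie algebra of J̃.) -/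
open Matrix

theorem block_lie_iff {O : Type*} [CommRing O] (σ : O ≃+* O) (w : O) {m : ℕ}
    (K A : Matrix (Fin m) (Fin m) O) (b : Matrix (Fin m) Unit O)
    (c : Matrix Unit (Fin m) O) (d : Matrix Unit Unit O) :
    (((fromBlocks A b c d).map σ)ᵀ * fromBlocks K 0 0 (w • 1)
      + fromBlocks K 0 0 (w • 1) * fromBlocks A b c d = 0) ↔
    ((A.map σ)ᵀ * K + K * A = 0 ∧ w • (c.map σ)ᵀ + K * b = 0 ∧
      (b.map σ)ᵀ * K + w • c = 0 ∧ w • ((d.map σ)ᵀ + d) = 0) := by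
  rw [fromBlocks_map, fromBlocks_transpose, fromBlocks_multiply, fromBlocks_multiply,
    fromBlocks_add, ← fromBlocks_zero, fromBlocks_inj]
  simp [smul_add]

theorem smul_cancel_matrix {O : Type*} [CommRing O] {w : O} (hw : w ∈ nonZeroDivisors O)
    {p q : Type*} {M N : Matrix p q O} (h : w • M = w • N) : M = N := by
  ext i j
  have h1 : w * M i j = w * N i j := congrFun (congrFun h i) j
  exact (mul_cancel_left_mem_nonZeroDivisors hw).1 h1

theorem map_smul_tr {O : Type*} [CommRing O] (σ : O ≃+* O) {w : O} (hw : σ w = w)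
    {p q : Type*} (M : Matrix p q O) : ((w • M).map σ)ᵀ = w • (M.map σ)ᵀ := by
  ext i j
  simp [hw]

/-- For a σ-hermitian matrix `K` of size `n-1` with unit determinant, and `ϖ` a σ-fixed
nonzerodivisor, the map `μ : [[A,b],[c,d]] ↦ [[A, ϖb],[c,d]]` is a bijection from the
integral unitary Lie algebra of `J̃ = diag(K, 1)` onto that of `J = diag(K, ϖ)`. -/
theorem theta_bijOn_unitary_lie_algebra
    (O : Type*) [CommRing O] (σ : O ≃+* O) (hσ : ∀ x, σ (σ x) = x)
    (ϖ : O) (hreg : ϖ ∈ nonZeroDivisors O) (hϖ : σ ϖ = ϖ)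
    (m : ℕ) (hm : 1 ≤ m)
    (K : Matrix (Fin m) (Fin m) O) (hK : (K.map σ)ᵀ = K) (hKdet : IsUnit K.det) :
    let J : Matrix (Fin m ⊕ Unit) (Fin m ⊕ Unit) O :=
      Matrix.fromBlocks K 0 0 (ϖ • 1)
    let Jt : Matrix (Fin m ⊕ Unit) (Fin m ⊕ Unit) O :=
      Matrix.fromBlocks K 0 0 1
    let μ : Matrix (Fin m ⊕ Unit) (Fin m ⊕ Unit) O →
        Matrix (Fin m ⊕ Unit) (Fin m ⊕ Unit) O :=
      fun x => Matrix.fromBlocks x.toBlocks₁₁ (ϖ • x.toBlocks₁₂) x.toBlocks₂₁ x.toBlocks₂₂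
    Set.BijOn μ
      { x | (x.map σ)ᵀ * Jt + Jt * x = 0 }
      { x | (x.map σ)ᵀ * J + J * x = 0 } := by
  intro J Jt μ
  have hJt : Jt = fromBlocks K 0 0 ((1 : O) • 1) := by simp [Jt]
  refine ⟨?_, ?_, ?_⟩
  · intro x hx
    rw [Set.mem_setOf_eq, hJt, ← fromBlocks_toBlocks x, block_lie_iff] at hx
    obtain ⟨h1, h2, h3, h4⟩ := hx
    rw [one_smul] at h2 h3 h4
    change ((μ x).map σ)ᵀ * J + J * μ x = 0
    refine (block_lie_iff σ ϖ K _ _ _ _).2 ⟨h1, ?_, ?_, ?_⟩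
    · rw [Matrix.mul_smul, ← smul_add, h2, smul_zero]
    · rw [map_smul_tr σ hϖ, Matrix.smul_mul, ← smul_add, h3, smul_zero]
    · rw [h4, smul_zero]
  · intro x _ y _ h
    obtain ⟨h1, h2, h3, h4⟩ := fromBlocks_inj.1 h
    rw [← fromBlocks_toBlocks x, ← fromBlocks_toBlocks y, h1, smul_cancel_matrix hreg h2, h3, h4]
  · intro y hy
    rw [Set.mem_setOf_eq, ← fromBlocks_toBlocks y, block_lie_iff] at hy
    obtain ⟨h1, h2, h3, h4⟩ := hy
    set b : Matrix (Fin m) Unit O := -(K⁻¹ * (y.toBlocks₂₁.map σ)ᵀ) with hb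
    have hKb : K * b = -(y.toBlocks₂₁.map σ)ᵀ := by
      rw [hb, Matrix.mul_neg, Matrix.mul_nonsing_inv_cancel_left _ _ hKdet]
    have hwb : ϖ • b = y.toBlocks₁₂ := by
      have : K⁻¹ * (K * (ϖ • b)) = K⁻¹ * (K * y.toBlocks₁₂) := by
        congr 1
        rw [Matrix.mul_smul, hKb, smul_neg]
        exact neg_eq_of_add_eq_zero_right h2
      rwa [Matrix.nonsing_inv_mul_cancel_left _ _ hKdet,
        Matrix.nonsing_inv_mul_cancel_left _ _ hKdet] at this
    refine ⟨fromBlocks y.toBlocks₁₁ b y.toBlocks₂₁ y.toBlocks₂₂, ?_, ?_⟩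
    · rw [Set.mem_setOf_eq, hJt, block_lie_iff]
      refine ⟨h1, ?_, ?_, ?_⟩
      · rw [hKb, one_smul, add_neg_cancel]
      · apply smul_cancel_matrix hreg
        rw [one_smul, smul_zero, smul_add, ← Matrix.smul_mul, ← map_smul_tr σ hϖ, hwb, h3]
      · apply smul_cancel_matrix hreg
        rw [one_smul, h4, smul_zero]
    · simp only [μ, toBlocks_fromBlocks₁₁, toBlocks_fromBlocks₁₂, toBlocks_fromBlocks₂₁,
        toBlocks_fromBlocks₂₂, hwb, fromBlocks_toBlocks]
end

section
/- Let F be a field equipped with a ring involution σ (a field automorphism with σ ∘ σ = id); write x̄ := σ(x) and N x := x·x̄ for x ∈ F. (i) For every a ∈ F and every b ∈ Fˣ, the matrix γ(a, b) := [[a, b],[(1 − N a)/b̄, −ā·b/b̄]] satisfies γ(a,b)·γ(a,b)‾ = 1₂ (where the bar on a matrix is entrywise σ) and det γ(a, b) = −b/b̄. (ii) Conversely, if γ ∈ M₂(F) satisfies γ·γ̄ = 1₂ and its (1,2)-entry b := γ₁₂ is nonzero, then γ₂₁ = (1 − N a)/b̄ and γ₂₂ = −ā·b/b̄ where a := γ₁₁;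 that is, γ = γ(a, b). -/
open Matrix

/-- Parametrization of the rank-2 symmetric space: (i) for `b ≠ 0` the matrix
`γ(a,b) = [[a, b],[(1 - Na)/b̄, -ā b/b̄]]` satisfies `γ γ̄ = 1` and `det γ(a,b) = -b/b̄`;
(ii) conversely any `γ` with `γ γ̄ = 1` and nonzero `(1,2)`-entry is of this form. -/
theorem symmetric_space_two_parametrization
    (F : Type*) [Field F] (σ : F ≃+* F) (hσ : ∀ x, σ (σ x) = x) :
    (∀ a b : F, b ≠ 0 →
      let γ : Matrix (Fin 2) (Fin 2) F :=
        !![a, b; (1 - a * σ a) / σ b, -(σ a) * b / σ b]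
      γ * γ.map σ = 1 ∧ γ.det = -b / σ b) ∧
    (∀ γ : Matrix (Fin 2) (Fin 2) F, γ * γ.map σ = 1 → γ 0 1 ≠ 0 →
      γ 1 0 = (1 - γ 0 0 * σ (γ 0 0)) / σ (γ 0 1) ∧
      γ 1 1 = -(σ (γ 0 0)) * γ 0 1 / σ (γ 0 1)) := by
  constructor
  · intro a b hb
    have hb' : σ b ≠ 0 := by simpa using hb
    refine ⟨?_, ?_⟩
    · ext i j
      fin_cases i <;> fin_cases j <;>
        simp [Matrix.mul_apply, Fin.sum_univ_two, hσ] <;> field_simp <;> ring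
    · rw [Matrix.det_fin_two_of]
      field_simp
      ring
  · intro γ h hb
    have hb' : σ (γ 0 1) ≠ 0 := by simpa using hb
    have h0 := congrArg σ (congrFun (congrFun h 0) 0)
    have h1 := congrArg σ (congrFun (congrFun h 0) 1)
    simp [Matrix.mul_apply, Fin.sum_univ_two, hσ] at h0 h1
    constructor
    · rw [eq_div_iff hb']
      linear_combination h0
    · rw [eq_div_iff hb']
      linear_combination h1
end

section
/- Let F be a field equipped with a ring involution σ; write x̄ := σ(x) and N x := x·x̄. Let ε ∈ Fˣ with ε̄ = ε, let a ∈ F with N a ≠ 1, and let δ ∈ F with N δ = 1. Then the following are equivalent: (i) there exists g ∈ M₂(F) such that ᵗḡ·diag(1, −ε)·g = diag(1, −ε), g₁₁ = a, det g = δ, and g₁₂·g₂₁ ≠ 0; (ii) there exists c ∈ Fˣ with ε·N c = N a − 1. (Explicitly, when (ii) holds witnesses are g = [[a, ε·c̄·δ],[c, δ·ā]] if a ≠ 0, and g = [[0, −δ/c],[c, 0]] if a = 0.) -/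
open Matrix

/-- Matching criterion for the unitary group of the hermitian form `diag(1, -ε)` in rank 2:
there exists a unitary `g` with prescribed upper-left entry `a`, determinant `δ`, and
nonzero off-diagonal entries, if and only if `Na - 1` lies in `ε·N(Fˣ)`. -/
theorem matching_criterion_unitary_group_n2
    (F : Type*) [Field F] (σ : F ≃+* F) (hσ : ∀ x, σ (σ x) = x)
    (ε : F) (hε : ε ≠ 0) (hεfix : σ ε = ε)
    (a : F) (ha : a * σ a ≠ 1)
    (δ : F) (hδ : δ * σ δ = 1) :
    (∃ g : Matrix (Fin 2) (Fin 2) F,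
        (g.map σ)ᵀ * !![1, 0; 0, -ε] * g = !![1, 0; 0, -ε] ∧
        g 0 0 = a ∧ g.det = δ ∧ g 0 1 * g 1 0 ≠ 0) ↔
    (∃ c : F, c ≠ 0 ∧ ε * (c * σ c) = a * σ a - 1) := by
  constructor
  · rintro ⟨g, hg, h0, -, hne⟩
    refine ⟨g 1 0, right_ne_zero_of_mul hne, ?_⟩
    have h := congrFun (congrFun hg 0) 0
    simp [Matrix.mul_apply, Fin.sum_univ_two, h0] at h
    linear_combination -h
  · rintro ⟨c, hc, h⟩
    refine ⟨!![a, ε * σ c * δ; c, δ * σ a], ?_, by simp, ?_, ?_⟩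
    · ext i j
      fin_cases i <;> fin_cases j <;>
        simp [Matrix.mul_apply, Fin.sum_univ_two, hσ, hεfix]
      · linear_combination -h
      · ring
      · ring
      · linear_combination (ε * ε * c * σ c - ε * a * σ a) * hδ + ε * h
    · rw [Matrix.det_fin_two_of]
      linear_combination -δ * h
    · have hδ0 : δ ≠ 0 := left_ne_zero_of_mul (hδ ▸ one_ne_zero)
      simp [hε, hc, hδ0]
end

section
/- Let F be a field equipped with a ring involution σ; write x̄ := σ(x) and N x := x·x̄. Let ε ∈ Fˣ with ε̄ = ε, let a, d ∈ F with ā = −a and d̄ = −d, and let β ∈ Fˣ with β̄ = β. Then the following are equivalent: (i) there exists x ∈ M₂(F) such that ᵗx̄·diag(1, −ε) + diag(1, −ε)·x = 0, x₁₁ = a, x₂₂ = d, and x₁₂·x₂₁ = β; (ii) there exists c ∈ Fˣ with β = ε·N c. (Explicitly, any such x has x₁₂ = ε·x̄₂₁, and a witness in (i) is x = [[a, ε·c̄],[c, d]].) -/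
open Matrix

/-- Lie-algebra matching criterion in rank 2 for the unitary Lie algebra of
`diag(1, -ε)`: there exists `x` in this Lie algebra with prescribed diagonal `(a, d)` and
product of off-diagonal entries equal to `β`, iff `β` lies in `ε·N(Fˣ)`. -/
theorem matching_criterion_unitary_lie_n2
    (F : Type*) [Field F] (σ : F ≃+* F) (hσ : ∀ x, σ (σ x) = x)
    (ε : F) (hε : ε ≠ 0) (hεfix : σ ε = ε)
    (a d : F) (ha : σ a = -a) (hd : σ d = -d)
    (β : F) (hβ0 : β ≠ 0) (hβfix : σ β = β) :
    (∃ x : Matrix (Fin 2) (Fin 2) F,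
        (x.map σ)ᵀ * !![1, 0; 0, -ε] + !![1, 0; 0, -ε] * x = 0 ∧
        x 0 0 = a ∧ x 1 1 = d ∧ x 0 1 * x 1 0 = β) ↔
    (∃ c : F, c ≠ 0 ∧ β = ε * (c * σ c)) := by
  constructor
  · rintro ⟨x, h, -, -, hb⟩
    have h01 := congrFun (congrFun h 0) 1
    simp [Matrix.mul_apply, Matrix.vecMul, dotProduct, Fin.sum_univ_two] at h01
    have hx : x 0 1 = ε * σ (x 1 0) := by linear_combination h01
    refine ⟨x 1 0, ?_, ?_⟩
    · intro h0
      rw [h0, mul_zero] at hb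
      exact hβ0 hb.symm
    · rw [← hb, hx]
      ring
  · rintro ⟨c, -, hc⟩
    refine ⟨!![a, ε * σ c; c, d], ?_, rfl, rfl, ?_⟩
    · ext i j
      fin_cases i <;> fin_cases j <;>
        simp [Matrix.mul_apply, Fin.sum_univ_two, hσ, hεfix, ha, hd] <;> ring
    · simp [hc]
      ring
end

section
/- Let A be a commutative local ring in which 2 is invertible, and let ϖ ∈ A be a nonzerodivisor lying in the maximal ideal of A such that A is ϖ-adically complete and separated. Let B := A[X]/(X² − ϖ), write π for the image of X in B (so B = A ⊕ A·π is free of rank 2 over A and π² = ϖ), and let σ be the A-algebra involution of B with σ(π) = −π; for a matrix M over B let M̄ denote the entrywise application of σ. Let n = 2m be an even positive integer and let G ∈ Mₙ(B) satisfy ᵗḠ = G (σ-hermitian) and G = π·G₀ for some invertible matrix G₀ ∈ GLₙ(B) (π-modularity). Then there exists P ∈ GLₙ(B) such that ᵗP·G·P̄ equals the block diagonal matrix with m diagonal 2×2 blocks [[0, π],[−π, 0]]. Equivalently, every π-modular σ-hermitian lattice of even rank over B admits a hyperbolic basis; in particular, the unitary group acts transitively on the π-modular lattices in a given hermitian space.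 -/
open Matrix

/-- The ramified quadratic extension `B = A[X]/(X² - ϖ)` of `A`. -/
noncomputable def ramPoly {A : Type*} [CommRing A] (ϖ : A) : Polynomial A :=
  Polynomial.X ^ 2 - Polynomial.C ϖ


namespace PiMod

def Cong {B ι κ : Type*} [CommRing B] [StarRing B] [Fintype ι] [Fintype κ] [DecidableEq ι]
    [DecidableEq κ] (K : Matrix ι ι B) (K' : Matrix κ κ B) : Prop :=
  ∃ (Q : Matrix ι κ B) (R : Matrix κ ι B), Q * R = 1 ∧ R * Q = 1 ∧ Qᴴ * K * Q = K'

section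
variable {B : Type*} [CommRing B] [StarRing B]
variable {ι κ μ : Type*} [Fintype ι] [Fintype κ] [DecidableEq ι] [DecidableEq κ]
  [Fintype μ] [DecidableEq μ]

theorem Cong.trans {K : Matrix ι ι B} {K' : Matrix κ κ B} {K'' : Matrix μ μ B}
    (h : Cong K K') (h' : Cong K' K'') : Cong K K'' := by
  obtain ⟨Q, R, h1, h2, h3⟩ := h
  obtain ⟨Q', R', h1', h2', h3'⟩ := h'
  refine ⟨Q * Q', R' * R, ?_, ?_, ?_⟩
  · rw [Matrix.mul_assoc, ← Matrix.mul_assoc Q', h1', Matrix.one_mul, h1]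
  · rw [Matrix.mul_assoc, ← Matrix.mul_assoc R, h2, Matrix.one_mul, h2']
  · rw [← h3', ← h3, conjTranspose_mul]; simp only [Matrix.mul_assoc]

theorem Cong.submatrix (K : Matrix ι ι B) (e : κ ≃ ι) : Cong K (K.submatrix e e) := by
  refine ⟨(1 : Matrix ι ι B).submatrix id e, (1 : Matrix ι ι B).submatrix e id, ?_, ?_, ?_⟩
  · rw [Matrix.submatrix_mul_equiv]; simp
  · rw [← Matrix.submatrix_mul _ _ _ _ _ Function.bijective_id]; simp
  · ext i j
    simp [Matrix.mul_apply, Matrix.one_apply, apply_ite]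

theorem Cong.of_det {K : Matrix ι ι B} (Q : Matrix ι ι B) (h : IsUnit Q.det) :
    Cong K (Qᴴ * K * Q) :=
  ⟨Q, Q⁻¹, Matrix.mul_nonsing_inv _ h, Matrix.nonsing_inv_mul _ h, rfl⟩

theorem Cong.skew {K : Matrix ι ι B} {K' : Matrix κ κ B} (h : Cong K K') (hK : Kᴴ = -K) :
    K'ᴴ = -K' := by
  obtain ⟨Q, R, h1, h2, rfl⟩ := h
  simp [conjTranspose_mul, hK, Matrix.mul_assoc]

theorem Cong.isInv {K : Matrix ι ι B} {K' : Matrix κ κ B} (h : Cong K K')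
    (hK : ∃ L, K * L = 1) : ∃ L, K' * L = 1 := by
  obtain ⟨Q, R, h1, h2, rfl⟩ := h
  obtain ⟨L, hL⟩ := hK
  refine ⟨R * L * Rᴴ, ?_⟩
  calc Qᴴ * K * Q * (R * L * Rᴴ) = Qᴴ * (K * ((Q * R) * L)) * Rᴴ := by
        simp only [Matrix.mul_assoc]
    _ = 1 := by rw [h1, Matrix.one_mul, hL, Matrix.mul_one, ← conjTranspose_mul, h2,
                  conjTranspose_one]

theorem Cong.blocks {ι' κ' : Type*} [Fintype ι'] [Fintype κ'] [DecidableEq ι'] [DecidableEq κ']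
    {K : Matrix ι ι B} {K' : Matrix κ κ B} {L : Matrix ι' ι' B} {L' : Matrix κ' κ' B}
    (h : Cong K K') (h' : Cong L L') :
    Cong (fromBlocks K 0 0 L) (fromBlocks K' 0 0 L') := by
  obtain ⟨Q, R, h1, h2, h3⟩ := h
  obtain ⟨Q', R', h1', h2', h3'⟩ := h'
  refine ⟨fromBlocks Q 0 0 Q', fromBlocks R 0 0 R', ?_, ?_, ?_⟩
  · simp [fromBlocks_multiply, h1, h1']
  · simp [fromBlocks_multiply, h2, h2']
  · simp [fromBlocks_multiply, fromBlocks_conjTranspose, h3, h3']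

theorem Cong.schur (W : Matrix ι ι B) (X : Matrix ι κ B) (Y : Matrix κ ι B) (Z : Matrix κ κ B)
    (hW : IsUnit W.det) (hs : (fromBlocks W X Y Z)ᴴ = -fromBlocks W X Y Z) :
    Cong (fromBlocks W X Y Z) (fromBlocks W 0 0 (Z - Y * W⁻¹ * X)) := by
  rw [fromBlocks_conjTranspose, fromBlocks_neg, fromBlocks_inj] at hs
  obtain ⟨hs1, hs2, hs3, hs4⟩ := hs
  have hi : W⁻¹ᴴ = - W⁻¹ := by
    rw [conjTranspose_nonsing_inv, hs1]
    apply Matrix.inv_eq_left_inv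
    simp [Matrix.nonsing_inv_mul _ hW]
  refine ⟨fromBlocks 1 (-(W⁻¹ * X)) 0 1, fromBlocks 1 (W⁻¹ * X) 0 1, ?_, ?_, ?_⟩
  · simp [fromBlocks_multiply]
  · simp [fromBlocks_multiply]
  · have e1 : W * (W⁻¹ * X) = X := by
      rw [← Matrix.mul_assoc, Matrix.mul_nonsing_inv _ hW, Matrix.one_mul]
    have e2 : Y * (W⁻¹ * W) = Y := by
      rw [Matrix.nonsing_inv_mul _ hW, Matrix.mul_one]
    simp [fromBlocks_multiply, fromBlocks_conjTranspose, hi, hs3, Matrix.mul_assoc, e1, e2]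
    abel

def J : Matrix (Fin 2) (Fin 2) B := !![0, 1; -1, 0]

theorem cong_scale (a u b : B) (hu : IsUnit u) : ∃ b',
    Cong !![a, u; -star u, b] !![a, 1; -1, b'] := by
  obtain ⟨v, hv⟩ := hu.exists_right_inv
  have hv' : star u * star v = 1 := by rw [← star_mul', hv, star_one]
  refine ⟨star v * b * v, ?_⟩
  convert Cong.of_det (K := !![a, u; -star u, b]) !![1, 0; 0, v] ?_ using 1
  · ext i j
    fin_cases i <;> fin_cases j <;>
      simp [Matrix.mul_apply, Fin.sum_univ_two, hv, mul_comm, hv']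
  · simp
    exact IsUnit.of_mul_eq_one u (by rw [mul_comm, hv])

theorem cong_two [IsLocalRing B] (h2 : IsUnit (2 : B))
    (hsk : ∀ x : B, star x = -x → ¬ IsUnit x)
    (hens : ∀ a b : B, star a = -a → star b = -b → ∃ t : B, a + t - star t + star t * t * b = 0)
    (a u b : B) (hu : IsUnit u) (hs : (!![a, u; -star u, b] : Matrix _ _ B)ᴴ = - !![a, u; -star u, b]) :
    Cong !![a, u; -star u, b] (J : Matrix _ _ B) := by
  obtain ⟨b₁, h₁⟩ := cong_scale a u b hu
  have hs₁ := h₁.skew hs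
  have ha : star a = -a := by simpa using congrFun (congrFun hs₁ 0) 0
  have hb : star b₁ = -b₁ := by simpa using congrFun (congrFun hs₁ 1) 1
  obtain ⟨t, ht⟩ := hens a b₁ ha hb
  have h₂ : Cong !![a, 1; -1, b₁] !![0, 1 + star t * b₁; -star (1 + star t * b₁), b₁] := by
    convert Cong.of_det (K := !![a, 1; -1, b₁]) !![1, 0; t, 1] ?_ using 1
    · ext i j
      fin_cases i <;> fin_cases j <;>
        simp [Matrix.mul_apply, Fin.sum_univ_two, hb]
      · linear_combination -ht
      · ring
    · simp
  have hu2 : IsUnit (1 + star t * b₁) := by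
    have : ¬ IsUnit (-(star t * b₁)) := by
      rw [IsUnit.neg_iff]
      exact fun h => hsk _ hb (isUnit_of_mul_isUnit_right h)
    rcases IsLocalRing.isUnit_or_isUnit_of_add_one (a := 1 + star t * b₁) (b := -(star t * b₁))
      (by ring) with h | h
    · exact h
    · exact absurd h this
  obtain ⟨b₃, h₃⟩ := cong_scale 0 _ b₁ hu2
  have h := (h₁.trans h₂).trans h₃
  refine h.trans ?_
  have hb3 : star b₃ = -b₃ := by simpa using congrFun (congrFun (h.skew hs) 1) 1
  obtain ⟨v, hv⟩ := h2.exists_right_inv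
  have hvs : star v = v := by
    have : (2 : B) * star v = 1 := by
      have := congrArg star hv
      rw [star_mul', star_one] at this
      simpa using this
    calc star v = star v * (2 * v) := by rw [hv, mul_one]
      _ = v := by linear_combination v * this
  convert Cong.of_det (K := !![0, 1; -1, b₃]) !![1, v * b₃; 0, 1] ?_ using 1
  · ext i j
    fin_cases i <;> fin_cases j <;>
      simp [J, Matrix.mul_apply, Fin.sum_univ_two, hb3, hvs]
    linear_combination b₃ * hv
  · simp

def eqv (m : ℕ) : Fin 2 ⊕ (Fin 2 × Fin m) ≃ Fin 2 × Fin (m + 1) where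
  toFun := Sum.elim (fun i => (i, 0)) (fun p => (p.1, p.2.succ))
  invFun p := Fin.cases (Sum.inl p.1) (fun j => Sum.inr (p.1, j)) p.2
  left_inv := by rintro (i | ⟨i, j⟩) <;> simp
  right_inv := by
    rintro ⟨i, j⟩
    refine Fin.cases ?_ (fun j => ?_) j <;> simp

theorem main [IsLocalRing B] (h2 : IsUnit (2 : B))
    (hsk : ∀ x : B, star x = -x → ¬ IsUnit x)
    (hens : ∀ a b : B, star a = -a → star b = -b → ∃ t : B, a + t - star t + star t * t * b = 0)
    (m : ℕ) (K : Matrix (Fin 2 × Fin m) (Fin 2 × Fin m) B) (hs : Kᴴ = -K) (hi : ∃ L, K * L = 1) :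
    Cong K (blockDiagonal fun _ : Fin m => (J : Matrix _ _ B)) := by
  induction m with
  | zero => exact ⟨1, 1, by simp, by simp, by ext i; exact i.2.elim0⟩
  | succ m ih =>
    obtain ⟨j, hj⟩ : ∃ j, IsUnit (K (0, 0) j) := by
      obtain ⟨L, hL⟩ := hi
      by_contra! hc
      have h1 := congrFun (congrFun hL (0, 0)) (0, 0)
      rw [Matrix.mul_apply, Matrix.one_apply_eq] at h1
      have : (1 : B) ∈ IsLocalRing.maximalIdeal B := by
        rw [← h1]
        exact Ideal.sum_mem _ fun j _ => Ideal.mul_mem_right _ _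
          ((IsLocalRing.mem_maximalIdeal _).2 (hc j))
      exact (IsLocalRing.mem_maximalIdeal _).1 this isUnit_one
    have hne : j ≠ (0, 0) := by
      rintro rfl
      refine hsk _ ?_ hj
      simpa using congrFun (congrFun hs (0, 0)) (0, 0)
    let e := (eqv m).trans (Equiv.swap (1, 0) j)
    have e0 : e (Sum.inl 0) = (0, 0) := by
      simp only [e, Equiv.trans_apply, eqv, Equiv.coe_fn_mk, Sum.elim_inl]
      exact Equiv.swap_apply_of_ne_of_ne (by simp) hne.symm
    have e1 : e (Sum.inl 1) = j := by
      simp [e, eqv]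
    have c1 := Cong.submatrix K e
    set M := K.submatrix e e with hM
    have hMs := c1.skew hs
    have hMu : IsUnit (M (Sum.inl 0) (Sum.inl 1)) := by simpa [hM, e0, e1] using hj
    rw [← fromBlocks_toBlocks M] at c1 hMs
    have hW : M.toBlocks₁₁ = !![M (Sum.inl 0) (Sum.inl 0), M (Sum.inl 0) (Sum.inl 1);
        -star (M (Sum.inl 0) (Sum.inl 1)), M (Sum.inl 1) (Sum.inl 1)] := by
      have h10 := congrFun (congrFun hMs (Sum.inl 1)) (Sum.inl 0)
      simp at h10
      ext i k
      fin_cases i <;> fin_cases k <;> simp [toBlocks₁₁] at h10 ⊢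
      simp [h10]
    have hWs : (M.toBlocks₁₁)ᴴ = -M.toBlocks₁₁ := by
      rw [fromBlocks_conjTranspose, fromBlocks_neg, fromBlocks_inj] at hMs
      exact hMs.1
    have hWJ : Cong M.toBlocks₁₁ (J : Matrix _ _ B) := by
      rw [hW] at hWs ⊢
      exact cong_two h2 hsk hens _ _ _ hMu hWs
    have hWdet : IsUnit M.toBlocks₁₁.det := by
      obtain ⟨Q, R, h1, h2, h3⟩ := hWJ
      have := congrArg Matrix.det h3
      rw [det_mul, det_mul] at this
      have hJ : (J : Matrix _ _ B).det = 1 := by simp [J]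
      rw [hJ] at this
      exact isUnit_of_mul_isUnit_right (isUnit_of_mul_isUnit_left (this ▸ isUnit_one))
    have c2 := c1.trans (Cong.schur _ _ _ _ hWdet hMs)
    have hs2 := c2.skew hs
    obtain ⟨L, hL⟩ := c2.isInv hi
    set S := M.toBlocks₂₂ - M.toBlocks₂₁ * M.toBlocks₁₁⁻¹ * M.toBlocks₁₂
    have hS : Cong S _ := ih S
      (by rw [fromBlocks_conjTranspose, fromBlocks_neg, fromBlocks_inj] at hs2; exact hs2.2.2.2)
      ⟨L.toBlocks₂₂, by
        rw [← fromBlocks_toBlocks L, fromBlocks_multiply, ← fromBlocks_one, fromBlocks_inj] at hL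
        simpa using hL.2.2.2⟩
    refine (c2.trans (hWJ.blocks hS)).trans ?_
    convert Cong.submatrix _ (eqv m).symm using 1
    ext ⟨i, j⟩ ⟨i', j'⟩
    refine Fin.cases ?_ (fun j => ?_) j <;> refine Fin.cases ?_ (fun j' => ?_) j' <;>
      simp [eqv, blockDiagonal_apply, Fin.succ_ne_zero, (Fin.succ_ne_zero _).symm]

end

section
variable {A : Type*} [CommRing A] {ϖ : A}

theorem root_sq : (AdjoinRoot.root (ramPoly ϖ)) ^ 2 = AdjoinRoot.of (ramPoly ϖ) ϖ := by
  have : Polynomial.eval₂ (AdjoinRoot.of (ramPoly ϖ)) (AdjoinRoot.root (ramPoly ϖ))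
      (Polynomial.X ^ 2 - Polynomial.C ϖ) = 0 := AdjoinRoot.eval₂_root (ramPoly ϖ)
  rw [Polynomial.eval₂_sub, Polynomial.eval₂_X_pow, Polynomial.eval₂_C] at this
  exact sub_eq_zero.1 this

theorem repr (x : AdjoinRoot (ramPoly ϖ)) : ∃ a b : A,
    x = AdjoinRoot.of _ a + AdjoinRoot.root _ * AdjoinRoot.of _ b := by
  induction x using AdjoinRoot.induction_on with
  | ih p =>
    induction p using Polynomial.induction_on' with
    | add p q hp hq =>
      obtain ⟨a, b, h⟩ := hp
      obtain ⟨a', b', h'⟩ := hq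
      exact ⟨a + a', b + b', by rw [map_add, h, h', map_add, map_add]; ring⟩
    | monomial n c =>
      rw [← Polynomial.C_mul_X_pow_eq_monomial, map_mul, map_pow, AdjoinRoot.mk_X, AdjoinRoot.mk_C]
      rcases Nat.even_or_odd' n with ⟨k, rfl | rfl⟩
      · exact ⟨c * ϖ ^ k, 0, by rw [pow_mul, root_sq]; simp⟩
      · exact ⟨0, c * ϖ ^ k, by rw [pow_succ, pow_mul, root_sq]; simp; ring⟩

theorem root_reg (hreg : ϖ ∈ nonZeroDivisors A) (x : AdjoinRoot (ramPoly ϖ))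
    (h : AdjoinRoot.root _ * x = 0) : x = 0 := by
  have hm : (ramPoly ϖ).Monic := Polynomial.monic_X_pow_sub_C ϖ two_ne_zero
  have h1 : ϖ • x = 0 := by
    rw [Algebra.smul_def, AdjoinRoot.algebraMap_eq, ← root_sq, pow_two, mul_assoc, h, mul_zero]
  let b := (AdjoinRoot.powerBasis' hm).basis
  apply b.repr.injective
  ext i
  have h2 := congrArg (fun y => b.repr y i) h1
  simp only [map_smul, Finsupp.smul_apply, smul_eq_mul, map_zero, Finsupp.zero_apply] at h2
  simpa using (mul_left_mem_nonZeroDivisors_eq_zero_iff hreg).1 h2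

theorem sqrt_exists [IsLocalRing A] (h2 : IsUnit (2 : A)) (hmem : ϖ ∈ IsLocalRing.maximalIdeal A)
    [IsAdicComplete (Ideal.span {ϖ}) A] (c : A) :
    ∃ u : A, u ^ 2 = 1 + ϖ * c ∧ IsUnit (1 + u) := by
  have hH : HenselianRing A (Ideal.span {ϖ}) := inferInstance
  have hm : (Polynomial.X ^ 2 - Polynomial.C (1 + ϖ * c) : Polynomial A).Monic :=
    Polynomial.monic_X_pow_sub_C _ two_ne_zero
  obtain ⟨u, hu, hu1⟩ := hH.is_henselian _ hm 1
    (by simp [Ideal.mem_span_singleton]) (by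
      simp [one_add_one_eq_two]
      exact h2.map (Ideal.Quotient.mk (Ideal.span {ϖ})))
  refine ⟨u, by simpa [Polynomial.IsRoot, sub_eq_zero] using hu, ?_⟩
  by_contra hc
  have h3 : u - 1 ∈ IsLocalRing.maximalIdeal A :=
    (Ideal.span_singleton_le_iff_mem _).2 hmem hu1
  have := Ideal.sub_mem _ ((IsLocalRing.mem_maximalIdeal _).2 hc) h3
  rw [show 1 + u - (u - 1) = 2 by ring] at this
  exact (IsLocalRing.mem_maximalIdeal _).1 this h2

end

end PiMod

/-- Every π-modular σ-hermitian form of even rank over `B = A[X]/(X² - ϖ)` (with `A` a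
ϖ-adically complete local ring in which 2 is invertible, `ϖ` a nonzerodivisor in the
maximal ideal, and `σ` the `A`-involution with `σ(π) = -π`) admits a hyperbolic basis:
there is an invertible `P` with `ᵗP·G·P̄` block diagonal with blocks `[[0, π],[-π, 0]]`. -/
theorem pi_modular_hermitian_hyperbolic
    (A : Type*) [CommRing A] [IsLocalRing A] (h2 : IsUnit (2 : A))
    (ϖ : A) (hreg : ϖ ∈ nonZeroDivisors A) (hmem : ϖ ∈ IsLocalRing.maximalIdeal A)
    [IsAdicComplete (Ideal.span {ϖ}) A]
    (σ : AdjoinRoot (ramPoly ϖ) ≃ₐ[A] AdjoinRoot (ramPoly ϖ))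
    (hσ : σ (AdjoinRoot.root (ramPoly ϖ)) = -AdjoinRoot.root (ramPoly ϖ))
    (m : ℕ) (hm : 1 ≤ m)
    (G : Matrix (Fin 2 × Fin m) (Fin 2 × Fin m) (AdjoinRoot (ramPoly ϖ)))
    (hherm : (G.map σ)ᵀ = G)
    (hmod : ∃ G₀ : Matrix (Fin 2 × Fin m) (Fin 2 × Fin m) (AdjoinRoot (ramPoly ϖ)),
      IsUnit G₀ ∧ G = AdjoinRoot.root (ramPoly ϖ) • G₀) :
    ∃ P : Matrix (Fin 2 × Fin m) (Fin 2 × Fin m) (AdjoinRoot (ramPoly ϖ)),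
      IsUnit P ∧
      Pᵀ * G * P.map σ =
        Matrix.blockDiagonal fun _ : Fin m =>
          !![0, AdjoinRoot.root (ramPoly ϖ); -AdjoinRoot.root (ramPoly ϖ), 0] := by
  set π := AdjoinRoot.root (ramPoly ϖ) with hπ
  let of := AdjoinRoot.of (ramPoly ϖ)
  have hσof : ∀ a, σ (of a) = of a := fun a => σ.commutes a
  have hinv : ∀ x, σ (σ x) = x := by
    intro x
    obtain ⟨a, b, rfl⟩ := PiMod.repr x
    simp only [map_add, map_mul, ← hπ, hσ, map_neg, neg_neg]
    change σ (σ (of a)) + π * σ (σ (of b)) = of a + π * of b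
    simp only [hσof]
  letI : StarRing (AdjoinRoot (ramPoly ϖ)) :=
    { star := σ
      star_involutive := hinv
      star_mul := fun x y => by rw [map_mul, mul_comm]
      star_add := map_add σ }
  have hstar : ∀ x, star x = σ x := fun _ => rfl
  have h2B : IsUnit (2 : AdjoinRoot (ramPoly ϖ)) := by
    have h := h2.map of
    rwa [map_ofNat of 2] at h
  have hpp : π ^ 2 = of ϖ := PiMod.root_sq
  let φ : AdjoinRoot (ramPoly ϖ) →+* IsLocalRing.ResidueField A :=
    AdjoinRoot.lift (IsLocalRing.residue A) 0 (by
      simpa [ramPoly] using hmem)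
  have hφ : ∀ a b, φ (of a + π * of b) = IsLocalRing.residue A a := by
    intro a b
    simp [φ, of, hπ]
  have hloc : IsLocalHom φ := by
    constructor
    intro x hx
    obtain ⟨a, b, rfl⟩ := PiMod.repr x
    change IsUnit (φ (of a + π * of b)) at hx
    change IsUnit (of a + π * of b)
    rw [hφ] at hx
    have ha : IsUnit a := by
      by_contra hc
      rw [(IsLocalRing.residue_eq_zero_iff a).2 ((IsLocalRing.mem_maximalIdeal _).2 hc)] at hx
      exact not_isUnit_zero hx
    have hn : IsUnit (a ^ 2 - ϖ * b ^ 2) := by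
      by_contra hc
      have := Ideal.add_mem _ ((IsLocalRing.mem_maximalIdeal _).2 hc)
        (Ideal.mul_mem_right (b ^ 2) _ hmem)
      rw [sub_add_cancel] at this
      exact (IsLocalRing.mem_maximalIdeal _).1 this (ha.pow 2)
    have : (of a + π * of b) * (of a - π * of b) = of (a ^ 2 - ϖ * b ^ 2) := by
      simp only [map_sub, map_mul, map_pow, ← hpp]; ring
    exact isUnit_of_mul_isUnit_left (this ▸ hn.map of)
  haveI : IsLocalRing (AdjoinRoot (ramPoly ϖ)) := RingHom.domain_isLocalRing φ
  have hskew : ∀ x : AdjoinRoot (ramPoly ϖ), star x = -x → ∃ b, x = π * of b := by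
    intro x hx
    obtain ⟨a, b, rfl⟩ := PiMod.repr x
    change star (of a + π * of b) = -(of a + π * of b) at hx
    rw [hstar, map_add, map_mul, hσof, hσof, hσ] at hx
    have : (2 : AdjoinRoot (ramPoly ϖ)) * of a = 0 := by linear_combination hx
    have h0 := (h2B.mul_right_eq_zero).1 this
    exact ⟨b, by change of a + π * of b = _; rw [h0, zero_add]⟩
  have hsk : ∀ x : AdjoinRoot (ramPoly ϖ), star x = -x → ¬ IsUnit x := by
    intro x hx hu
    obtain ⟨b, rfl⟩ := hskew x hx
    have := hu.map φ
    have h0 := hφ 0 b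
    rw [map_zero, zero_add, map_zero] at h0
    rw [h0] at this
    exact not_isUnit_zero this
  have hens : ∀ a b : AdjoinRoot (ramPoly ϖ), star a = -a → star b = -b →
      ∃ t, a + t - star t + star t * t * b = 0 := by
    intro a b ha hb
    obtain ⟨a, rfl⟩ := hskew a ha
    obtain ⟨b, rfl⟩ := hskew b hb
    obtain ⟨u, hu, hu1⟩ := PiMod.sqrt_exists h2 hmem (a * b)
    obtain ⟨w, hw⟩ := hu1.exists_right_inv
    refine ⟨π * of (-(a * w)), ?_⟩
    have key : a + 2 * (-(a * w)) - ϖ * (-(a * w)) ^ 2 * b = 0 := by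
      have e : a * (1 - 2 * w - ϖ * a * b * w ^ 2) = 0 := by
        have : 1 - 2 * w - ϖ * a * b * w ^ 2 = 0 := by
          linear_combination w ^ 2 * hu + (-(1 + (1 + u) * w - 2 * w)) * hw
        rw [this, mul_zero]
      linear_combination e
    have key2 := congrArg of key
    rw [hstar, map_mul, hσof, hσ]
    simp only [map_add, map_sub, map_mul, map_pow, map_neg, map_zero, map_ofNat, ← hpp] at key2 ⊢
    linear_combination π * key2
  obtain ⟨K, hK, rfl⟩ := hmod
  have hKs : Kᴴ = -K := by
    ext i j
    have h := congrFun (congrFun hherm i) j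
    simp only [transpose_apply, map_apply, Matrix.smul_apply, smul_eq_mul, map_mul, hσ] at h
    have := PiMod.root_reg hreg (σ (K j i) + K i j) (by rw [← hπ]; linear_combination -h)
    simp only [conjTranspose_apply, Matrix.neg_apply, hstar]
    linear_combination this
  obtain ⟨Q, R, h1, h2', h3⟩ := PiMod.main h2B hsk hens m K hKs hK.exists_right_inv
  have hQ : (Q.map σ).map σ = Q := by ext i j; simp [hinv]
  have hQ' : (Q.map σ)ᵀ = Qᴴ := rfl
  refine ⟨Q.map σ, ?_, ?_⟩
  · refine IsUnit.of_mul_eq_one (R.map σ) ?_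
    have := congrArg (fun M => M.map σ) h1
    simpa [Matrix.map_mul] using this
  · rw [hQ, hQ', Matrix.mul_smul, Matrix.smul_mul, h3, ← blockDiagonal_smul]
    congr 1
    funext k
    ext i j
    fin_cases i <;> fin_cases j <;> simp [PiMod.J]
end
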